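/- Let K ⊆ Ĉ be compact, let P ⊆ Ĉ contain exactly one point from each connected component of Ĉ \ K, and suppose f is holomorphic in an open neighborhood U of K (holomorphic at ∞ meaning that w ↦ f(1/w) is holomorphic in a neighborhood of 0). Then there exist constants A, B ∈ (1, ∞) and a sequence of rational functions R_n of degree ≤ n whose poles lie in P, such that sup_{z ∈ K} |f(z) − R_n(z)| ≤ A/Bⁿ for all n ∈ ℕ. -/

import Mathlib

open Set Metric Topology Filter Polynomial

noncomputable section

/-- A Jordan curve: a set homeomorphic to the unit circle. -/
def IsJordanCurve {X : Type*} [TopologicalSpace X] (E : Set X) : Prop :=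
  Nonempty (E ≃ₜ (Metric.sphere (0 : ℂ) 1 : Set ℂ))

/-- A simple arc: a set homeomorphic to the open unit interval `(0,1)`. -/
def IsSimpleArc {X : Type*} [TopologicalSpace X] (E : Set X) : Prop :=
  Nonempty (E ≃ₜ (Set.Ioo (0 : ℝ) 1 : Set ℝ))

/-- The connected components of a set. -/
def setComponents {X : Type*} [TopologicalSpace X] (A : Set X) : Set (Set X) :=
  {C | ∃ x ∈ A, C = connectedComponentIn A x}

/-- The edges of the pair `(G, V)`: the connected components of `G \ V`. -/
def graphEdges {X : Type*} [TopologicalSpace X] (G V : Set X) : Set (Set X) :=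
  setComponents (G \ V)

/-- The degree of a vertex `v`: the number of edges `e` with `v ∈ closure e \ e`,
where an edge is counted twice if `closure e \ e = {v}`. -/
def vertexDegree {X : Type*} [TopologicalSpace X] (G V : Set X) (v : X) : ℕ :=
  {e ∈ graphEdges G V | v ∈ closure e \ e}.ncard +
    {e ∈ graphEdges G V | closure e \ e = {v}}.ncard

/-- `G` is a lemniscate graph with (finite) vertex set `V`. -/
structure IsLemniscateGraphWith {X : Type*} [TopologicalSpace X] (G V : Set X) : Prop where
  vertex_subset : V ⊆ G
  vertex_finite : V.Finite
  edges_finite : (graphEdges G V).Finite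
  edge_shape : ∀ e ∈ graphEdges G V, IsJordanCurve e ∨ (IsSimpleArc e ∧ closure e \ e ⊆ V)
  degree_even : ∀ v ∈ V, Even (vertexDegree G V v)
  degree_ge_four : ∀ v ∈ V, 4 ≤ vertexDegree G V v

/-- `G` is a lemniscate graph (for some finite vertex set). -/
def IsLemniscateGraph {X : Type*} [TopologicalSpace X] (G : Set X) : Prop :=
  ∃ V, IsLemniscateGraphWith G V

/-- The faces of `G`: the connected components of the complement of `G`. -/
def graphFaces {X : Type*} [TopologicalSpace X] (G : Set X) : Set (Set X) :=
  setComponents Gᶜ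

/-- A 2-coloring of the faces of `G`, recorded by the set `grey` of grey faces:
two distinct faces whose closures share a common edge get different colors. -/
def IsTwoColoring {X : Type*} [TopologicalSpace X] (G V : Set X) (grey : Set (Set X)) : Prop :=
  grey ⊆ graphFaces G ∧
    ∀ F₁ ∈ graphFaces G, ∀ F₂ ∈ graphFaces G, F₁ ≠ F₂ →
      (∃ e ∈ graphEdges G V, e ⊆ closure F₁ ∧ e ⊆ closure F₂) →
      (F₁ ∈ grey ↔ F₂ ∉ grey)

/-- The distance function of a metric space structure on the Riemann sphere. -/
def mdist (m : MetricSpace (OnePoint ℂ)) : OnePoint ℂ → OnePoint ℂ → ℝ :=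
  m.toPseudoMetricSpace.toDist.dist

/-- The metric space structure `m` induces the standard topology of the Riemann sphere. -/
def InducesSphereTopology (m : MetricSpace (OnePoint ℂ)) : Prop :=
  m.toPseudoMetricSpace.toUniformSpace.toTopologicalSpace =
    (inferInstance : TopologicalSpace (OnePoint ℂ))

/-- `E` and `F` are `ε`-homeomorphic with respect to the metric `m`: there is a
homeomorphism of the sphere carrying `E` to `F` and moving points less than `ε`. -/
def EpsHomeomorphic (m : MetricSpace (OnePoint ℂ)) (ε : ℝ) (E F : Set (OnePoint ℂ)) : Prop :=
  ∃ φ : OnePoint ℂ ≃ₜ OnePoint ℂ, φ '' E = F ∧ ∃ c < ε, ∀ z, mdist m (φ z) z ≤ c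

/-- `r` is a rational map on the Riemann sphere: the continuous extension of `p/q`
for coprime polynomials `p`, `q`, not both constant. -/
def IsRationalMap (r : OnePoint ℂ → OnePoint ℂ) : Prop :=
  Continuous r ∧ ∃ p q : ℂ[X], IsCoprime p q ∧ ¬(p.natDegree = 0 ∧ q.natDegree = 0) ∧
    ∀ z : ℂ, q.eval z ≠ 0 → r (z : OnePoint ℂ) = ((p.eval z / q.eval z : ℂ) : OnePoint ℂ)

/-- The lemniscate of `r` : the preimage of the unit circle. -/
def lemniscate (r : OnePoint ℂ → OnePoint ℂ) : Set (OnePoint ℂ) :=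
  r ⁻¹' ((fun w : ℂ => (w : OnePoint ℂ)) '' {w : ℂ | ‖w‖ = 1})

/-- The copy of a planar set inside the Riemann sphere. -/
def toSphere (s : Set ℂ) : Set (OnePoint ℂ) := (fun z : ℂ => (z : OnePoint ℂ)) '' s


/-- `r` is a rational map of degree at most `n` (constants are allowed,
so that degree `≤ n` makes sense for every `n`): the continuous extension of
`p/q` with `p`, `q` coprime, `q ≠ 0`, and `max (deg p) (deg q) ≤ n`. -/
def IsRationalMapDegLE (r : OnePoint ℂ → OnePoint ℂ) (n : ℕ) : Prop :=
  Continuous r ∧ ∃ p q : ℂ[X], IsCoprime p q ∧ q ≠ 0 ∧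
    p.natDegree ≤ n ∧ q.natDegree ≤ n ∧
    ∀ z : ℂ, q.eval z ≠ 0 → r (z : OnePoint ℂ) = ((p.eval z / q.eval z : ℂ) : OnePoint ℂ)

/-- `f : Ĉ → ℂ` is holomorphic on the open set `U ⊆ Ĉ` : holomorphic at every finite
point of `U`, and at `∞` (if `∞ ∈ U`) the function `w ↦ f(1/w)` is holomorphic in a
neighborhood of `0`. -/
def SphereHolomorphicOn (f : OnePoint ℂ → ℂ) (U : Set (OnePoint ℂ)) : Prop :=
  (∀ z : ℂ, (z : OnePoint ℂ) ∈ U → DifferentiableAt ℂ (fun w : ℂ => f (w : OnePoint ℂ)) z) ∧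
  (OnePoint.infty ∈ U → ∃ s ∈ 𝓝 (0 : ℂ), DifferentiableOn ℂ
      (fun w : ℂ => f (if w = 0 then OnePoint.infty else ((w⁻¹ : ℂ) : OnePoint ℂ))) s)

/-! Cutting off `f` and applying the Cauchy–Pompeiu formula writes `f` on a planar compact set `K`
as an integral of resolvents `(w - z)⁻¹` against an integrable density on a compact set of `w`
outside `K`. A Neumann series shows that if `(w₀ - z)⁻¹` is a uniform limit of polynomials in a
single function `u`, then all `(w - z)⁻¹` with `w` near `w₀` are such limits, at a common geometric
rate. Hence the set of these `w` is open and relatively closed in the complement of `K`, so it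
contains every complementary component it meets: taking `u = z` for the component of `∞` and
`u = (a - z)⁻¹` for the component of a pole `a` reaches every `w`, and by compactness finitely many
generators suffice. A Möbius transformation reduces the spherical statement to the planar one by
moving a pole to `∞`. -/

section CauchyPompeiu

open MeasureTheory

variable {E : Type*} [NormedAddCommGroup E] [NormedSpace ℂ E]

/-- The Wirtinger derivative `∂g/∂z̄` at `w`. -/
def wirtingerBar (g : ℂ → E) (w : ℂ) : E :=
  (2 : ℂ)⁻¹ • (fderiv ℝ g w 1 + Complex.I • fderiv ℝ g w Complex.I)

theorem wirtingerBar_eq_zero {g : ℂ → E} {w : ℂ} (hg : DifferentiableAt ℂ g w) :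
    wirtingerBar g w = 0 := by
  have hI : fderiv ℂ g w Complex.I = Complex.I • fderiv ℂ g w 1 := by
    rw [← map_smul, smul_eq_mul, mul_one]
  rw [wirtingerBar, hg.fderiv_restrictScalars ℝ]
  simp [hI, smul_smul]

theorem continuous_wirtingerBar {g : ℂ → E} (hg : ContDiff ℝ 1 g) :
    Continuous (wirtingerBar g) := by
  have := hg.continuous_fderiv one_ne_zero
  unfold wirtingerBar
  fun_prop

theorem support_wirtingerBar_subset (g : ℂ → E) :
    Function.support (wirtingerBar g) ⊆ tsupport g := fun w hw =>
  support_fderiv_subset ℝ fun h => hw (by simp [wirtingerBar, h])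

theorem notMem_tsupport_wirtingerBar {g : ℂ → E} {z : ℂ}
    (hg : ∀ᶠ w in 𝓝 z, DifferentiableAt ℂ g w) : z ∉ tsupport (wirtingerBar g) :=
  notMem_tsupport_iff_eventuallyEq.2 (hg.mono fun _ => wirtingerBar_eq_zero)

theorem wirtingerBar_comp_const_add (g : ℂ → E) (z w : ℂ) :
    wirtingerBar (fun v => g (z + v)) w = wirtingerBar g (z + w) := by
  simp only [wirtingerBar, fderiv_comp_add_left]

theorem conj_smul_wirtingerBar (g : ℂ → E) (w v : ℂ) :
    (starRingEnd ℂ) v • wirtingerBar g w =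
      (2 : ℂ)⁻¹ • (fderiv ℝ g w v + Complex.I • fderiv ℝ g w (v * Complex.I)) := by
  have hv : v = v.re • (1 : ℂ) + v.im • Complex.I := by
    simp [Complex.re_add_im]
  have hvI : v * Complex.I = (-v.im) • (1 : ℂ) + v.re • Complex.I := by
    apply Complex.ext <;> simp
  have hconj : (starRingEnd ℂ) v = v.re - v.im * Complex.I := by
    apply Complex.ext <;> simp
  rw [hvI, hconj]
  nth_rewrite 3 [hv]
  simp only [map_add, map_smul, wirtingerBar, ← Complex.coe_smul (E := E)]
  match_scalars
  · ring
  · linear_combination (-(2 : ℂ)⁻¹ * v.im) * Complex.I_sq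

theorem integral_Ioi_fderiv_smul {V F : Type*} [NormedAddCommGroup V] [NormedSpace ℝ V]
    [NormedAddCommGroup F] [NormedSpace ℝ F] [CompleteSpace F] {g : V → F} (hg : ContDiff ℝ 1 g)
    (hgc : HasCompactSupport g) {v : V} (hv : v ≠ 0) :
    ∫ r in Ioi (0 : ℝ), fderiv ℝ g (r • v) v = -g 0 := by
  have hderiv (r : ℝ) : deriv (fun r : ℝ => g (r • v)) r = fderiv ℝ g (r • v) v := by
    have hsmul : HasDerivAt (fun r : ℝ => r • v) v r := by
      simpa using (hasDerivAt_id r).smul_const v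
    exact (((hg.differentiable one_ne_zero _).hasFDerivAt).comp_hasDerivAt r hsmul).deriv
  have h := HasCompactSupport.integral_Ioi_deriv_eq (f := fun r : ℝ => g (r • v)) (by fun_prop)
    (hgc.comp_isClosedEmbedding (isClosedEmbedding_smul_left hv)) 0
  simpa only [hderiv, zero_smul] using h

theorem integral_fderiv_circleMap {F : Type*} [NormedAddCommGroup F] [NormedSpace ℝ F]
    [CompleteSpace F] {g : ℂ → F} (hg : ContDiff ℝ 1 g) (c : ℂ) (r : ℝ) :
    ∫ θ in (-Real.pi)..Real.pi, fderiv ℝ g (circleMap c r θ) (circleMap 0 r θ * Complex.I) = 0 := by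
  have hderiv (θ : ℝ) : HasDerivAt (fun θ : ℝ => g (circleMap c r θ))
      (fderiv ℝ g (circleMap c r θ) (circleMap 0 r θ * Complex.I)) θ :=
    (hg.differentiable one_ne_zero _).hasFDerivAt.comp_hasDerivAt θ (hasDerivAt_circleMap c r θ)
  have hcont : Continuous fun θ : ℝ =>
      fderiv ℝ g (circleMap c r θ) (circleMap 0 r θ * Complex.I) := by
    have := hg.continuous_fderiv one_ne_zero
    fun_prop
  rw [intervalIntegral.integral_eq_sub_of_hasDerivAt (fun θ _ => hderiv θ)
    (hcont.intervalIntegrable _ _), ← periodic_circleMap c r (-Real.pi)]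
  rw [show -Real.pi + 2 * Real.pi = Real.pi by ring, sub_self]

theorem integrableOn_polarCoord_target {F : Type*} [NormedAddCommGroup F] {G : ℝ × ℝ → F}
    (hG : Continuous G) {M : ℝ} (hM : ∀ p : ℝ × ℝ, M < p.1 → G p = 0) :
    IntegrableOn G polarCoord.target := by
  have h : IntegrableOn G (Icc 0 M ×ˢ Icc (-Real.pi) Real.pi) :=
    hG.continuousOn.integrableOn_compact (isCompact_Icc.prod isCompact_Icc)
  refine h.of_forall_sdiff_eq_zero polarCoord.open_target.measurableSet ?_
  rintro ⟨r, θ⟩ ⟨⟨hr, hθ⟩, hn⟩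
  by_contra hne
  exact hn ⟨⟨le_of_lt hr, not_lt.1 fun h => hne (hM _ h)⟩, Ioo_subset_Icc_self hθ⟩

theorem integrableOn_polarCoord_target_fderiv {F : Type*} [NormedAddCommGroup F] [NormedSpace ℝ F]
    {g : ℂ → F} (hg : ContDiff ℝ 1 g) (hgc : HasCompactSupport g) {v : ℝ → ℂ} (hv : Continuous v) :
    IntegrableOn (fun p : ℝ × ℝ => fderiv ℝ g (circleMap 0 p.1 p.2) (v p.2))
      polarCoord.target := by
  have := hg.continuous_fderiv one_ne_zero
  obtain ⟨M, hM⟩ := (hgc.fderiv ℝ).isCompact.isBounded.subset_closedBall 0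
  refine integrableOn_polarCoord_target (M := M) (by unfold circleMap; fun_prop) fun p hp => ?_
  rw [image_eq_zero_of_notMem_tsupport (f := fderiv ℝ g) fun hmem => ?_,
    zero_apply]
  have h := mem_closedBall_zero_iff.1 (hM hmem)
  rw [norm_circleMap_zero] at h
  exact absurd ((le_abs_self _).trans h) (not_le.2 hp)

variable [CompleteSpace E] {g : ℂ → E}

theorem setIntegral_polarCoord_target_fderiv_radial (hg : ContDiff ℝ 1 g)
    (hgc : HasCompactSupport g) :
    ∫ p in polarCoord.target, fderiv ℝ g (circleMap 0 p.1 p.2) (circleMap 0 1 p.2) =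
      -(2 * Real.pi) • g 0 := by
  have hint := integrableOn_polarCoord_target_fderiv hg hgc (v := circleMap 0 1) (by fun_prop)
  have hray (θ : ℝ) :
      ∫ r in Ioi (0 : ℝ), fderiv ℝ g (circleMap 0 r θ) (circleMap 0 1 θ) = -g 0 := by
    simpa [circleMap] using
      integral_Ioi_fderiv_smul hg hgc (circleMap_ne_center (c := 0) (θ := θ) one_ne_zero)
  rw [polarCoord_target, Measure.volume_eq_prod] at *
  rw [← setIntegral_prod_swap]
  refine (setIntegral_prod _ hint.swap).trans ?_
  simp only [Function.comp_apply, Prod.swap_prod_mk, hray, integral_const, MeasurableSet.univ,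
    measureReal_restrict_apply, univ_inter, Real.volume_real_Ioo_of_le
    (neg_le_self Real.pi_pos.le), smul_neg, neg_smul, neg_inj]
  ring_nf

theorem setIntegral_polarCoord_target_fderiv_angular (hg : ContDiff ℝ 1 g)
    (hgc : HasCompactSupport g) :
    ∫ p in polarCoord.target,
      fderiv ℝ g (circleMap 0 p.1 p.2) (circleMap 0 1 p.2 * Complex.I) = 0 := by
  have hint := integrableOn_polarCoord_target_fderiv hg hgc
    (v := fun θ => circleMap 0 1 θ * Complex.I) (by fun_prop)
  rw [polarCoord_target, Measure.volume_eq_prod] at *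
  rw [setIntegral_prod _ hint]
  refine setIntegral_eq_zero_of_forall_eq_zero fun r hr => ?_
  rw [← integral_Ioc_eq_integral_Ioo,
    ← intervalIntegral.integral_of_le (neg_le_self Real.pi_pos.le)]
  have hsmul (θ : ℝ) : circleMap 0 r θ * Complex.I = r • (circleMap 0 1 θ * Complex.I) := by
    simp [circleMap, mul_assoc]
  have h := integral_fderiv_circleMap hg 0 r
  simp only [hsmul, map_smul, intervalIntegral.integral_smul] at h
  exact (smul_eq_zero.1 h).resolve_left (ne_of_gt hr)

theorem integral_inv_smul_wirtingerBar (hg : ContDiff ℝ 1 g) (hgc : HasCompactSupport g) :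
    ∫ w, w⁻¹ • wirtingerBar g w = -Real.pi • g 0 := by
  have hpolar : ∀ p ∈ polarCoord.target, p.1 • ((Complex.polarCoord.symm p)⁻¹ •
      wirtingerBar g (Complex.polarCoord.symm p)) =
        (2 : ℂ)⁻¹ • (fderiv ℝ g (circleMap 0 p.1 p.2) (circleMap 0 1 p.2) +
          Complex.I • fderiv ℝ g (circleMap 0 p.1 p.2) (circleMap 0 1 p.2 * Complex.I)) := by
    rintro ⟨r, θ⟩ ⟨hr, -⟩
    have hr : (r : ℂ) ≠ 0 := by exact_mod_cast ne_of_gt hr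
    have hsymm : Complex.polarCoord.symm (r, θ) = circleMap 0 r θ := by
      simp [Complex.polarCoord_symm_apply, circleMap, Complex.exp_mul_I]
    have hconj : (starRingEnd ℂ) (circleMap 0 1 θ) = r * (circleMap 0 r θ)⁻¹ := by
      simp only [circleMap, Complex.ofReal_one, one_mul, zero_add, ← Complex.exp_conj, map_mul,
        Complex.conj_ofReal, Complex.conj_I, mul_neg, Complex.exp_neg, mul_inv_rev]
      field_simp
    rw [← conj_smul_wirtingerBar, hsymm, hconj, mul_smul, Complex.coe_smul]
  have hradial := integrableOn_polarCoord_target_fderiv hg hgc (v := circleMap 0 1) (by fun_prop)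
  have hangular := integrableOn_polarCoord_target_fderiv hg hgc
    (v := fun θ => circleMap 0 1 θ * Complex.I) (by fun_prop)
  rw [← Complex.integral_comp_polarCoord_symm,
    setIntegral_congr_fun polarCoord.open_target.measurableSet hpolar, integral_smul,
    integral_add hradial (hangular.fun_smul Complex.I), integral_smul,
    setIntegral_polarCoord_target_fderiv_radial hg hgc,
    setIntegral_polarCoord_target_fderiv_angular hg hgc, smul_zero, add_zero,
    ← Complex.coe_smul, ← Complex.coe_smul, smul_smul]
  congr 1
  push_cast
  ring

/-- The Cauchy–Pompeiu formula, without boundary term because `g` has compact support. -/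
theorem integral_inv_sub_smul_wirtingerBar (hg : ContDiff ℝ 1 g) (hgc : HasCompactSupport g)
    (z : ℂ) : ∫ w, (w - z)⁻¹ • wirtingerBar g w = -Real.pi • g z := by
  have h := integral_inv_smul_wirtingerBar (g := fun v => g (z + v)) (by fun_prop)
    (hgc.comp_homeomorph (Homeomorph.addLeft z))
  simp only [wirtingerBar_comp_const_add, add_zero] at h
  rw [← h, ← integral_add_left_eq_self _ z]
  simp

end CauchyPompeiu

section PolynomialSubspace

variable (R : Type*) {A : Type*} [CommRing R] [CommRing A] [Algebra R A]

/-- The polynomials in `u` of degree at most `n`, with coefficients in `R`. -/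
def polynomialSubspace (u : A) (n : ℕ) : Submodule R A :=
  (degreeLT R (n + 1)).map (aeval u).toLinearMap

variable {R} {u : A}

theorem mem_polynomialSubspace {n : ℕ} {a : A} :
    a ∈ polynomialSubspace R u n ↔ ∃ p : R[X], p.natDegree ≤ n ∧ aeval u p = a := by
  simp only [polynomialSubspace, Submodule.mem_map, mem_degreeLT, degree_lt_iff_coeff_zero,
    natDegree_le_iff_coeff_eq_zero, Nat.succ_le_iff, AlgHom.toLinearMap_apply]

instance (n : ℕ) : Module.Finite R (polynomialSubspace R u n) :=
  inferInstanceAs (Module.Finite R ((degreeLT R (n + 1)).map _))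

theorem polynomialSubspace_mono {m n : ℕ} (h : m ≤ n) :
    polynomialSubspace R u m ≤ polynomialSubspace R u n :=
  Submodule.map_mono (degreeLT_mono (by lia))

theorem one_mem_polynomialSubspace (n : ℕ) : 1 ∈ polynomialSubspace R u n :=
  mem_polynomialSubspace.2 ⟨1, by simp, by simp⟩

theorem mul_mem_polynomialSubspace {m n : ℕ} {a b : A} (ha : a ∈ polynomialSubspace R u m)
    (hb : b ∈ polynomialSubspace R u n) : a * b ∈ polynomialSubspace R u (m + n) := by
  obtain ⟨p, hp, rfl⟩ := mem_polynomialSubspace.1 ha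
  obtain ⟨q, hq, rfl⟩ := mem_polynomialSubspace.1 hb
  exact mem_polynomialSubspace.2 ⟨p * q, natDegree_mul_le_of_le hp hq, map_mul _ _ _⟩

theorem pow_mem_polynomialSubspace {m : ℕ} {a : A} (ha : a ∈ polynomialSubspace R u m) (n : ℕ) :
    a ^ n ∈ polynomialSubspace R u (m * n) := by
  obtain ⟨p, hp, rfl⟩ := mem_polynomialSubspace.1 ha
  exact mem_polynomialSubspace.2 ⟨p ^ n, by simpa [mul_comm] using natDegree_pow_le_of_le n hp,
    map_pow _ _ _⟩

theorem exists_mem_polynomialSubspace {a : A} (ha : a ∈ Algebra.adjoin R {u}) :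
    ∃ n, a ∈ polynomialSubspace R u n := by
  rw [Algebra.adjoin_singleton_eq_range_aeval] at ha
  obtain ⟨p, rfl⟩ := ha
  exact ⟨p.natDegree, mem_polynomialSubspace.2 ⟨p, le_rfl, rfl⟩⟩

variable (R) in
/-- The polynomials `b` in `u` for which `x * b` is again a polynomial in `u`. -/
def adjoinColon (u x : A) : Submodule R A :=
  (Algebra.adjoin R {u}).toSubmodule ⊓
    (Algebra.adjoin R {u}).toSubmodule.comap (LinearMap.mulLeft R x)

theorem mem_adjoinColon {x b : A} :
    b ∈ adjoinColon R u x ↔ b ∈ Algebra.adjoin R {u} ∧ x * b ∈ Algebra.adjoin R {u} :=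
  Iff.rfl

theorem mul_mem_adjoinColon {x a b : A} (hb : b ∈ adjoinColon R u x)
    (ha : a ∈ Algebra.adjoin R {u}) : b * a ∈ adjoinColon R u x :=
  mem_adjoinColon.2 ⟨mul_mem (mem_adjoinColon.1 hb).1 ha, by
    rw [← mul_assoc]
    exact mul_mem (mem_adjoinColon.1 hb).2 ha⟩

theorem one_sub_sub_mul_mem_adjoin {x b : A} (hb : b ∈ adjoinColon R u x) (w : R) :
    1 - (algebraMap R A w - x) * b ∈ Algebra.adjoin R {u} := by
  obtain ⟨hb, hxb⟩ := mem_adjoinColon.1 hb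
  rw [sub_mul]
  exact sub_mem (one_mem _) (sub_mem (mul_mem (algebraMap_mem _ w) hb) hxb)

theorem one_sub_sub_mul_mem_polynomialSubspace {x b : A} {n : ℕ}
    (hb : b ∈ polynomialSubspace R u n) (hxb : x * b ∈ polynomialSubspace R u n) (w : R) :
    1 - (algebraMap R A w - x) * b ∈ polynomialSubspace R u n := by
  rw [sub_mul, ← Algebra.smul_def]
  exact sub_mem (one_mem_polynomialSubspace n) (sub_mem (Submodule.smul_mem _ w hb) hxb)

/-- The partial sums of the Neumann series of the resolvent of `x` at `w`, started at an
approximate inverse `b` of `w - x`. -/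
def neumannSum (x b : A) (N : ℕ) (w : R) : A :=
  b * ∑ j ∈ Finset.range N, (1 - (algebraMap R A w - x) * b) ^ j

theorem neumannSum_mem_adjoinColon {x b : A} (hb : b ∈ adjoinColon R u x) (N : ℕ) (w : R) :
    neumannSum x b N w ∈ adjoinColon R u x :=
  mul_mem_adjoinColon hb (sum_mem fun j _ => pow_mem (one_sub_sub_mul_mem_adjoin hb w) j)

theorem neumannSum_mem_polynomialSubspace {x b : A} {m : ℕ} (hb : b ∈ polynomialSubspace R u m)
    (hxb : x * b ∈ polynomialSubspace R u m) (N : ℕ) (w : R) :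
    neumannSum x b N w ∈ polynomialSubspace R u (m * N) := by
  rw [neumannSum, Finset.mul_sum]
  refine sum_mem fun j hj => ?_
  have h := mul_mem_polynomialSubspace hb
    (pow_mem_polynomialSubspace (one_sub_sub_mul_mem_polynomialSubspace hb hxb w) j)
  refine polynomialSubspace_mono ?_ h
  calc m + m * j = m * (j + 1) := by ring
    _ ≤ m * N := Nat.mul_le_mul_left m (Finset.mem_range.1 hj)

theorem resolvent_sub_neumannSum {x : A} {w : R} (hw : w ∈ resolventSet R x) (b : A) (N : ℕ) :
    resolvent x w - neumannSum x b N w =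
      resolvent x w * (1 - (algebraMap R A w - x) * b) ^ N := by
  have hinv : resolvent x w * (algebraMap R A w - x) = 1 := Ring.inverse_mul_cancel _ hw
  have hgeom := mul_neg_geom_sum (1 - (algebraMap R A w - x) * b) N
  rw [sub_sub_cancel] at hgeom
  rw [neumannSum]
  linear_combination (b * ∑ j ∈ Finset.range N, (1 - (algebraMap R A w - x) * b) ^ j) * hinv -
    resolvent x w * hgeom

end PolynomialSubspace

section PolynomialResolventSet

variable {𝕜 A : Type*} [NontriviallyNormedField 𝕜] [NormedCommRing A] [NormedAlgebra 𝕜 A]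

variable (𝕜) in
/-- The points `w` at which `w - x` has an approximate inverse `b` such that both `b` and `x * b`
are polynomials in `u`. -/
def polynomialResolventSet (u x : A) : Set 𝕜 :=
  {w | ∃ b ∈ adjoinColon 𝕜 u x, ‖1 - (algebraMap 𝕜 A w - x) * b‖ < 1}

variable {u x : A} {w : 𝕜}

theorem isOpen_polynomialResolventSet (u x : A) : IsOpen (polynomialResolventSet 𝕜 u x) := by
  have h : polynomialResolventSet 𝕜 u x =
      ⋃ b ∈ adjoinColon 𝕜 u x, {w | ‖1 - (algebraMap 𝕜 A w - x) * b‖ < 1} := by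
    ext w
    simp [polynomialResolventSet]
  rw [h]
  exact isOpen_biUnion fun b _ => isOpen_lt (by fun_prop) continuous_const

theorem mem_polynomialResolventSet_self (h : ‖x‖ < ‖w‖) : w ∈ polynomialResolventSet 𝕜 x x := by
  have hw : w ≠ 0 := norm_pos_iff.1 ((norm_nonneg x).trans_lt h)
  refine ⟨algebraMap 𝕜 A w⁻¹, mem_adjoinColon.2 ⟨algebraMap_mem _ _,
    mul_mem (Algebra.self_mem_adjoin_singleton 𝕜 x) (algebraMap_mem _ _)⟩, ?_⟩
  have hy : 1 - (algebraMap 𝕜 A w - x) * algebraMap 𝕜 A w⁻¹ = w⁻¹ • x := by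
    rw [sub_mul, ← map_mul, mul_inv_cancel₀ hw, map_one, sub_sub_cancel, mul_comm,
      ← Algebra.smul_def]
  rw [hy, norm_smul, norm_inv]
  exact (inv_mul_lt_one₀ (norm_pos_iff.2 hw)).2 h

theorem mem_polynomialResolventSet_resolvent (hw : w ∈ resolventSet 𝕜 x) :
    w ∈ polynomialResolventSet 𝕜 (resolvent x w) x := by
  have hinv : (algebraMap 𝕜 A w - x) * resolvent x w = 1 := Ring.mul_inverse_cancel _ hw
  have hxu : x * resolvent x w = algebraMap 𝕜 A w * resolvent x w - 1 := by
    linear_combination -hinv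
  have hu := Algebra.self_mem_adjoin_singleton 𝕜 (resolvent x w)
  refine ⟨resolvent x w, mem_adjoinColon.2 ⟨hu, ?_⟩, ?_⟩
  · rw [hxu]
    exact sub_mem (mul_mem (algebraMap_mem _ _) hu) (one_mem _)
  · rw [hinv, sub_self, norm_zero]
    exact one_pos

theorem norm_resolvent_sub_neumannSum_le (hw : w ∈ resolventSet 𝕜 x) (b : A) (N : ℕ) :
    ‖resolvent x w - neumannSum x b N w‖ ≤
      ‖resolvent x w‖ * ‖1 - (algebraMap 𝕜 A w - x) * b‖ ^ N := by
  rw [resolvent_sub_neumannSum hw]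
  induction N with
  | zero => simp
  | succ N ih =>
    rw [pow_succ, pow_succ, ← mul_assoc, ← mul_assoc]
    exact (norm_mul_le _ _).trans (by gcongr)

theorem tendsto_neumannSum (hw : w ∈ resolventSet 𝕜 x) {b : A}
    (hb : ‖1 - (algebraMap 𝕜 A w - x) * b‖ < 1) :
    Tendsto (fun N => neumannSum x b N w) atTop (𝓝 (resolvent x w)) := by
  have hlim : Tendsto (fun N => ‖resolvent x w‖ * ‖1 - (algebraMap 𝕜 A w - x) * b‖ ^ N)
      atTop (𝓝 0) := by
    simpa using (tendsto_pow_atTop_nhds_zero_of_lt_one (norm_nonneg _) hb).const_mul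
      ‖resolvent x w‖
  rw [tendsto_iff_norm_sub_tendsto_zero]
  refine squeeze_zero (fun _ => norm_nonneg _) (fun N => ?_) hlim
  rw [norm_sub_rev]
  exact norm_resolvent_sub_neumannSum_le hw b N

theorem continuous_neumannSum (x b : A) (N : ℕ) :
    Continuous (neumannSum x b N : 𝕜 → A) := by
  unfold neumannSum
  fun_prop

theorem mem_polynomialResolventSet_iff (hw : w ∈ resolventSet 𝕜 x) :
    w ∈ polynomialResolventSet 𝕜 u x ↔
      resolvent x w ∈ closure (adjoinColon 𝕜 u x : Set A) := by
  constructor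
  · rintro ⟨b, hb, hlt⟩
    exact mem_closure_of_tendsto (tendsto_neumannSum hw hlt)
      (.of_forall fun N => neumannSum_mem_adjoinColon hb N w)
  · intro h
    have hopen : IsOpen {b : A | ‖1 - (algebraMap 𝕜 A w - x) * b‖ < 1} :=
      isOpen_lt (by fun_prop) continuous_const
    obtain ⟨b, hlt, hb⟩ := mem_closure_iff.1 h _ hopen (by
      simp [resolvent, Ring.mul_inverse_cancel _ hw])
    exact ⟨b, hb, hlt⟩

variable [CompleteSpace A]

theorem polynomialResolventSet_subset_resolventSet (u x : A) :
    polynomialResolventSet 𝕜 u x ⊆ resolventSet 𝕜 x := by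
  rintro w ⟨b, -, hb⟩
  have h := isUnit_one_sub_of_norm_lt_one hb
  rw [sub_sub_cancel] at h
  exact isUnit_of_mul_isUnit_left h

theorem continuousOn_resolvent (x : A) :
    ContinuousOn (resolvent x) (resolventSet 𝕜 x) := fun _ hw =>
  (spectrum.hasDerivAt_resolvent_const_left hw).continuousAt.continuousWithinAt

theorem mem_polynomialResolventSet_of_mem_closure (hw : w ∈ resolventSet 𝕜 x)
    (h : w ∈ closure (polynomialResolventSet 𝕜 u x)) : w ∈ polynomialResolventSet 𝕜 u x := by
  have hsub := polynomialResolventSet_subset_resolventSet (𝕜 := 𝕜) u x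
  have hmaps : MapsTo (resolvent x) (polynomialResolventSet 𝕜 u x)
      (closure (adjoinColon 𝕜 u x : Set A)) := fun v hv =>
    (mem_polynomialResolventSet_iff (hsub hv)).1 hv
  rw [mem_polynomialResolventSet_iff hw, ← closure_closure]
  exact ((continuousOn_resolvent x w hw).mono hsub).mem_closure h hmaps

theorem exists_eventually_norm_resolvent_sub_neumannSum_le
    (hw : w ∈ polynomialResolventSet 𝕜 u x) :
    ∃ b ∈ adjoinColon 𝕜 u x, ∃ C ρ : ℝ, 0 < ρ ∧ ρ < 1 ∧ ∀ᶠ v in 𝓝 w, ∀ N,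
      ‖resolvent x v - neumannSum x b N v‖ ≤ C * ρ ^ N := by
  obtain ⟨b, hb, hlt⟩ := id hw
  obtain ⟨ρ, hρ, hρ1⟩ := exists_between hlt
  have hres := polynomialResolventSet_subset_resolventSet u x hw
  obtain ⟨C, hC⟩ := exists_gt ‖resolvent x w‖
  have hCev : ∀ᶠ v in 𝓝 w, ‖resolvent x v‖ < C :=
    (spectrum.hasDerivAt_resolvent_const_left hres).continuousAt.norm.eventually_lt_const hC
  have hρev : ∀ᶠ v in 𝓝 w, ‖1 - (algebraMap 𝕜 A v - x) * b‖ < ρ :=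
    Tendsto.eventually_lt_const hρ (ContinuousAt.tendsto (by fun_prop))
  have hC0 : 0 ≤ C := (norm_nonneg _).trans hC.le
  refine ⟨b, hb, C, ρ, (norm_nonneg _).trans_lt hρ, hρ1, ?_⟩
  filter_upwards [hCev, hρev, (spectrum.isOpen_resolventSet x).mem_nhds hres] with v hv hv' hvx N
  calc _ ≤ ‖resolvent x v‖ * ‖1 - (algebraMap 𝕜 A v - x) * b‖ ^ N :=
        norm_resolvent_sub_neumannSum_le hvx b N
    _ ≤ C * ρ ^ N := by gcongr

end PolynomialResolventSet

section GeometricApproximation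

/-- `f` is approximated at a geometric rate along the filtration `𝓡`: the `N`-th approximant lies
in `𝓡 (m * N)`, where the factor `m` accounts for the degree of the building blocks. -/
def HasGeometricApprox {A : Type*} [SeminormedAddCommGroup A] (𝓡 : ℕ → Set A) (f : A) : Prop :=
  ∃ (C ρ : ℝ) (m : ℕ), 0 < ρ ∧ ρ < 1 ∧ ∀ N, ∃ g ∈ 𝓡 (m * N), ‖f - g‖ ≤ C * ρ ^ N

variable {A : Type*} [SeminormedAddCommGroup A] {𝓡 𝓡' : ℕ → Set A} {f f' : A}

theorem hasGeometricApprox_zero (h : 0 ∈ 𝓡 0) : HasGeometricApprox 𝓡 0 :=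
  ⟨0, 1 / 2, 0, by norm_num, by norm_num, fun N => ⟨0, by rwa [zero_mul], by simp⟩⟩

theorem HasGeometricApprox.mono (hf : HasGeometricApprox 𝓡 f) (h : ∀ n, 𝓡 n ⊆ 𝓡' n) :
    HasGeometricApprox 𝓡' f := by
  obtain ⟨C, ρ, m, h0, h1, H⟩ := hf
  refine ⟨C, ρ, m, h0, h1, fun N => ?_⟩
  obtain ⟨g, hg, hfg⟩ := H N
  exact ⟨g, h _ hg, hfg⟩

theorem HasGeometricApprox.add
    (hadd : ∀ m n g h, g ∈ 𝓡 m → h ∈ 𝓡 n → g + h ∈ 𝓡 (m + n))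
    (hf : HasGeometricApprox 𝓡 f) (hf' : HasGeometricApprox 𝓡 f') :
    HasGeometricApprox 𝓡 (f + f') := by
  obtain ⟨C, ρ, m, h0, h1, H⟩ := hf
  obtain ⟨C', ρ', m', h0', h1', H'⟩ := hf'
  refine ⟨|C| + |C'|, max ρ ρ', m + m', lt_max_of_lt_left h0, max_lt h1 h1', fun N => ?_⟩
  obtain ⟨g, hg, hfg⟩ := H N
  obtain ⟨g', hg', hfg'⟩ := H' N
  refine ⟨g + g', add_mul m m' N ▸ hadd _ _ _ _ hg hg', ?_⟩
  calc ‖f + f' - (g + g')‖ = ‖(f - g) + (f' - g')‖ := by rw [add_sub_add_comm]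
    _ ≤ C * ρ ^ N + C' * ρ' ^ N := (norm_add_le _ _).trans (add_le_add hfg hfg')
    _ ≤ |C| * max ρ ρ' ^ N + |C'| * max ρ ρ' ^ N := by
      gcongr
      · exact le_abs_self C
      · exact le_max_left _ _
      · exact le_abs_self C'
      · exact le_max_right _ _
    _ = (|C| + |C'|) * max ρ ρ' ^ N := by ring

theorem HasGeometricApprox.exists_norm_sub_le (h𝓡 : Monotone 𝓡) (hf : HasGeometricApprox 𝓡 f) :
    ∃ A B : ℝ, 1 < A ∧ 1 < B ∧ ∀ n, ∃ g ∈ 𝓡 n, ‖f - g‖ ≤ A / B ^ n := by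
  obtain ⟨C, ρ, m, h0, h1, H⟩ := hf
  set B : ℝ := ρ⁻¹ ^ ((m + 1 : ℕ) : ℝ)⁻¹
  have hB1 : 1 < B := Real.one_lt_rpow ((one_lt_inv₀ h0).2 h1) (by positivity)
  have hBm : B ^ (m + 1) = ρ⁻¹ := Real.rpow_inv_natCast_pow (by positivity) (Nat.succ_ne_zero m)
  refine ⟨2 + |C| / ρ, B, ?_, hB1, fun n => ?_⟩
  · have : 0 ≤ |C| / ρ := by positivity
    linarith
  set N := n / (m + 1)
  obtain ⟨g, hg, hfg⟩ := H N
  have hmN : m * N ≤ n := (Nat.mul_le_mul_right N m.le_succ).trans (Nat.mul_div_le n (m + 1))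
  refine ⟨g, h𝓡 hmN hg, ?_⟩
  have hBn : B ^ n ≤ (ρ ^ (N + 1))⁻¹ := by
    rw [← inv_pow, ← hBm, ← pow_mul]
    exact pow_le_pow_right₀ hB1.le (Nat.lt_mul_div_succ n m.succ_pos).le
  calc ‖f - g‖ ≤ |C| * ρ ^ N := hfg.trans (by gcongr; exact le_abs_self C)
    _ = |C| / ρ * ρ ^ (N + 1) := by rw [pow_succ]; field_simp
    _ ≤ (2 + |C| / ρ) * (B ^ n)⁻¹ := by
      gcongr
      · linarith
      · rwa [le_inv_comm₀ (by positivity) (by positivity)]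

end GeometricApproximation

section ResolventIntegral

open MeasureTheory

variable {A : Type*} [NormedCommRing A] [NormedAlgebra ℂ A] [CompleteSpace A] {u x : A}
  {μ : Measure ℂ} {φ : ℂ → ℂ} {s L : Set ℂ}

theorem setIntegral_smul_neumannSum_mem {b : A} {m : ℕ} (hb : b ∈ polynomialSubspace ℂ u m)
    (hxb : x * b ∈ polynomialSubspace ℂ u m) (hL : IsCompact L) (hφ : IntegrableOn φ L μ)
    (hs : s ⊆ L) (N : ℕ) :
    ∫ w in s, φ w • neumannSum x b N w ∂μ ∈ polynomialSubspace ℂ u (m * N) := by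
  set V := polynomialSubspace ℂ u (m * N)
  have : CompleteSpace V := FiniteDimensional.complete ℂ V
  let v : ℂ → V := fun w => ⟨neumannSum x b N w, neumannSum_mem_polynomialSubspace hb hxb N w⟩
  have hv : Continuous v := (continuous_neumannSum x b N).subtype_mk _
  have hint : IntegrableOn (fun w => φ w • v w) s μ :=
    (hφ.smul_continuousOn hv.continuousOn hL).mono_set hs
  have h := V.subtypeL.integral_comp_comm hint
  exact h ▸ (∫ w in s, φ w • v w ∂μ).2

theorem exists_isOpen_hasGeometricApprox_setIntegral {w₀ : ℂ}
    (hw₀ : w₀ ∈ polynomialResolventSet ℂ u x) (hL : IsCompact L) (hLx : L ⊆ resolventSet ℂ x)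
    (hφ : IntegrableOn φ L μ) :
    ∃ t, IsOpen t ∧ w₀ ∈ t ∧ ∀ s ⊆ t ∩ L, MeasurableSet s →
      HasGeometricApprox (fun n => polynomialSubspace ℂ u n)
        (∫ w in s, φ w • resolvent x w ∂μ) := by
  obtain ⟨b, hb, C, ρ, hρ0, hρ1, hev⟩ := exists_eventually_norm_resolvent_sub_neumannSum_le hw₀
  obtain ⟨t, ht, hto, hw₀t⟩ := _root_.eventually_nhds_iff.1 hev
  obtain ⟨m₁, hb₁⟩ := exists_mem_polynomialSubspace (mem_adjoinColon.1 hb).1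
  obtain ⟨m₂, hb₂⟩ := exists_mem_polynomialSubspace (mem_adjoinColon.1 hb).2
  have hbm := polynomialSubspace_mono (le_max_left m₁ m₂) hb₁
  have hxbm := polynomialSubspace_mono (le_max_right m₁ m₂) hb₂
  refine ⟨t, hto, hw₀t, fun s hs hsm => ⟨C * ∫ w in s, ‖φ w‖ ∂μ, ρ, max m₁ m₂, hρ0, hρ1, fun N =>
    ⟨_, setIntegral_smul_neumannSum_mem hbm hxbm hL hφ (hs.trans inter_subset_right) N, ?_⟩⟩⟩
  have hφs : IntegrableOn φ s μ := hφ.mono_set (hs.trans inter_subset_right)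
  have hres : IntegrableOn (fun w => φ w • resolvent x w) s μ :=
    (hφ.smul_continuousOn ((continuousOn_resolvent x).mono hLx) hL).mono_set
      (hs.trans inter_subset_right)
  have hneu : IntegrableOn (fun w => φ w • neumannSum x b N w) s μ :=
    (hφ.smul_continuousOn (continuous_neumannSum x b N).continuousOn hL).mono_set
      (hs.trans inter_subset_right)
  rw [← integral_sub hres hneu]
  calc _ ≤ ∫ w in s, ‖φ w‖ * (C * ρ ^ N) ∂μ :=
        norm_integral_le_of_norm_le (hφs.norm.mul_const _)
          (ae_restrict_of_forall_mem hsm fun w hw => by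
            rw [← smul_sub, norm_smul]
            exact mul_le_mul_of_nonneg_left (ht w (hs hw).1 N) (norm_nonneg _))
    _ = C * (∫ w in s, ‖φ w‖ ∂μ) * ρ ^ N := by rw [integral_mul_const]; ring

theorem hasGeometricApprox_setIntegral_resolvent {𝓡 : ℕ → Set A} (h0 : 0 ∈ 𝓡 0)
    (hadd : ∀ m n g h, g ∈ 𝓡 m → h ∈ 𝓡 n → g + h ∈ 𝓡 (m + n))
    (hL : IsCompact L) (hφ : IntegrableOn φ L μ)
    (hres : ∀ w ∈ L, ∃ u, (∀ n, (polynomialSubspace ℂ u n : Set A) ⊆ 𝓡 n) ∧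
      w ∈ polynomialResolventSet ℂ u x) :
    HasGeometricApprox 𝓡 (∫ w in L, φ w • resolvent x w ∂μ) := by
  have hLx : L ⊆ resolventSet ℂ x := fun w hw => by
    obtain ⟨u, -, hu⟩ := hres w hw
    exact polynomialResolventSet_subset_resolventSet u x hu
  have hint : IntegrableOn (fun w => φ w • resolvent x w) L μ :=
    hφ.smul_continuousOn ((continuousOn_resolvent x).mono hLx) hL
  obtain ⟨t, hLt, -, h⟩ : ∃ t ⊇ L, MeasurableSet t ∧ ∀ s ⊆ t ∩ L, MeasurableSet s →
      HasGeometricApprox 𝓡 (∫ w in s, φ w • resolvent x w ∂μ) := by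
    refine hL.induction_on (p := fun S => ∃ t ⊇ S, MeasurableSet t ∧ ∀ s ⊆ t ∩ L,
      MeasurableSet s → HasGeometricApprox 𝓡 (∫ w in s, φ w • resolvent x w ∂μ)) ?_ ?_ ?_ ?_
    · refine ⟨∅, subset_rfl, .empty, fun s hs _ => ?_⟩
      rw [subset_empty_iff.1 (hs.trans inter_subset_left), setIntegral_empty]
      exact hasGeometricApprox_zero h0
    · rintro S T hST ⟨t, hTt, h⟩
      exact ⟨t, hST.trans hTt, h⟩
    · rintro S S' ⟨t, hSt, htm, h⟩ ⟨t', hSt', htm', h'⟩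
      refine ⟨t ∪ t', union_subset_union hSt hSt', htm.union htm', fun s hs hsm => ?_⟩
      rw [← integral_inter_add_sdiff htm (hint.mono_set (hs.trans inter_subset_right))]
      exact .add hadd (h _ (fun w hw => ⟨hw.2, (hs hw.1).2⟩) (hsm.inter htm))
        (h' _ (fun w hw => ⟨(hs hw.1).1.resolve_left hw.2, (hs hw.1).2⟩) (hsm.diff htm))
    · intro w hw
      obtain ⟨u, hu, hwu⟩ := hres w hw
      obtain ⟨t, hto, hwt, h⟩ := exists_isOpen_hasGeometricApprox_setIntegral hwu hL hLx hφ
      exact ⟨t, mem_nhdsWithin_of_mem_nhds (hto.mem_nhds hwt), t, subset_rfl, hto.measurableSet,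
        fun s hs hsm => (h s hs hsm).mono hu⟩
  exact h L (subset_inter hLt subset_rfl) hL.measurableSet

end ResolventIntegral

section SphereConnectedness

variable {A : Type*} [NormedCommRing A] [NormedAlgebra ℂ A] [CompleteSpace A] {u x : A}
  {F V : Set (OnePoint ℂ)} {w : ℂ}

theorem mem_polynomialResolventSet_of_isPreconnected (hF : IsPreconnected F)
    (hFx : ∀ z : ℂ, (z : OnePoint ℂ) ∈ F → z ∈ resolventSet ℂ x) (hV : IsOpen V)
    (hVu : ∀ z : ℂ, (z : OnePoint ℂ) ∈ V ↔ z ∈ polynomialResolventSet ℂ u x)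
    (hne : (F ∩ V).Nonempty) (hinf : OnePoint.infty ∈ F → OnePoint.infty ∈ V)
    (hw : (w : OnePoint ℂ) ∈ F) : w ∈ polynomialResolventSet ℂ u x := by
  refine (hVu w).1 (hF.subset_of_closure_inter_subset hV hne ?_ hw)
  rintro y ⟨hyV, hyF⟩
  induction y using OnePoint.rec with
  | infty => exact hinf hyF
  | coe z =>
    refine (hVu z).2 (mem_polynomialResolventSet_of_mem_closure (hFx z hyF) ?_)
    rw [← show ((↑) : ℂ → OnePoint ℂ) ⁻¹' V = polynomialResolventSet ℂ u x from Set.ext hVu,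
      ← OnePoint.isOpenMap_coe.preimage_closure_eq_closure_preimage OnePoint.continuous_coe]
    exact hyV

theorem mem_polynomialResolventSet_self_of_isPreconnected (hF : IsPreconnected F)
    (hFx : ∀ z : ℂ, (z : OnePoint ℂ) ∈ F → z ∈ resolventSet ℂ x) (hinf : OnePoint.infty ∈ F)
    (hw : (w : OnePoint ℂ) ∈ F) : w ∈ polynomialResolventSet ℂ x x := by
  set V : Set (OnePoint ℂ) :=
    (↑) '' polynomialResolventSet ℂ x x ∪ ((↑) '' closedBall (0 : ℂ) ‖x‖)ᶜ
  have hV : IsOpen V :=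
    (OnePoint.isOpen_image_coe.2 (isOpen_polynomialResolventSet x x)).union
      (OnePoint.isOpen_compl_image_coe.2 ⟨isClosed_closedBall, isCompact_closedBall _ _⟩)
  have hVinf : OnePoint.infty ∈ V := Or.inr OnePoint.infty_notMem_image_coe
  refine mem_polynomialResolventSet_of_isPreconnected hF hFx hV (fun z => ?_) ⟨_, hinf, hVinf⟩
    (fun _ => hVinf) hw
  simp only [V, mem_union, mem_compl_iff, OnePoint.coe_injective.mem_set_image,
    mem_closedBall_zero_iff, not_le, or_iff_left_iff_imp]
  exact mem_polynomialResolventSet_self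

theorem mem_polynomialResolventSet_resolvent_of_isPreconnected (hF : IsPreconnected F)
    (hFx : ∀ z : ℂ, (z : OnePoint ℂ) ∈ F → z ∈ resolventSet ℂ x) (hinf : OnePoint.infty ∉ F)
    {a : ℂ} (ha : (a : OnePoint ℂ) ∈ F) (hw : (w : OnePoint ℂ) ∈ F) :
    w ∈ polynomialResolventSet ℂ (resolvent x a) x :=
  mem_polynomialResolventSet_of_isPreconnected hF hFx
    (OnePoint.isOpen_image_coe.2 (isOpen_polynomialResolventSet (resolvent x a) x))
    (fun _ => OnePoint.coe_injective.mem_set_image)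
    ⟨_, ha, mem_image_of_mem _ (mem_polynomialResolventSet_resolvent (hFx a ha))⟩
    (fun h => absurd h hinf) hw

end SphereConnectedness

section SmoothCutoff

open Manifold

variable {E F : Type*} [NormedAddCommGroup E] [NormedSpace ℝ E] [FiniteDimensional ℝ E]
  [NormedAddCommGroup F] [NormedSpace ℝ F]

theorem exists_contDiff_hasCompactSupport_eventuallyEq {n : ℕ∞} {K U : Set E} {f : E → F}
    (hK : IsCompact K) (hU : IsOpen U) (hKU : K ⊆ U) (hf : ContDiffOn ℝ n f U) :
    ∃ g : E → F, ContDiff ℝ n g ∧ HasCompactSupport g ∧ ∀ z ∈ K, g =ᶠ[𝓝 z] f := by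
  obtain ⟨L, hL, hKL, hLU⟩ := exists_compact_between hK hU hKU
  obtain ⟨χ, hχ0, hχ1, -⟩ := exists_contMDiffMap_zero_one_nhds_of_isClosed (n := n) 𝓘(ℝ, E)
    isOpen_interior.isClosed_compl hK.isClosed (disjoint_compl_left_iff_subset.2 hKL)
  have hχ : ContDiff ℝ n χ := χ.contMDiff.contDiff
  rw [eventually_nhdsSet_iff_forall] at hχ0 hχ1
  refine ⟨fun z => χ z • f z, contDiff_iff_contDiffAt.2 fun z => ?_, ?_, fun z hz => ?_⟩
  · by_cases hz : z ∈ interior L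
    · exact hχ.contDiffAt.smul
        (hf.contDiffAt (hU.mem_nhds (hLU (interior_subset hz))))
    · refine contDiffAt_const (c := 0) |>.congr_of_eventuallyEq ?_
      filter_upwards [hχ0 z hz] with w hw
      rw [hw, zero_smul]
  · refine .intro hL fun z hz => ?_
    rw [(hχ0 z fun h => hz (interior_subset h)).self_of_nhds, zero_smul]
  · filter_upwards [hχ1 z hz] with w hw
    rw [hw, one_smul]

end SmoothCutoff

section ReflectComp

variable {k : Type*} [Field k] {n : ℕ} {p ℓ : k[X]}

theorem natDegree_reflect_comp_le (hp : p.natDegree ≤ n) (hℓ : ℓ.natDegree ≤ 1) :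
    ((p.reflect n).comp ℓ).natDegree ≤ n :=
  calc ((p.reflect n).comp ℓ).natDegree ≤ (p.reflect n).natDegree * ℓ.natDegree :=
        natDegree_comp_le
    _ ≤ n * 1 := Nat.mul_le_mul (natDegree_reflect_le.trans (max_le le_rfl hp)) hℓ
    _ = n := mul_one n

theorem eval_reflect_comp (hp : p.natDegree ≤ n) {z : k} (hz : ℓ.eval z ≠ 0) :
    ((p.reflect n).comp ℓ).eval z = ℓ.eval z ^ n * p.eval (ℓ.eval z)⁻¹ := by
  let _ : Invertible (ℓ.eval z)⁻¹ := invertibleOfNonzero (inv_ne_zero hz)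
  have h := eval₂_reflect_mul_pow (RingHom.id k) (ℓ.eval z)⁻¹ n p hp
  rw [invOf_eq_inv, inv_inv, eval₂_id, eval₂_id] at h
  rw [eval_comp, ← h, mul_left_comm, ← mul_pow, mul_inv_cancel₀ hz, one_pow, mul_one]

end ReflectComp

section RationalFunctions

/-- The functions on `K` of the form `p / q` with `p` and `q` of degree at most `n` and all zeros
of `q` in `P \ K`. -/
def rationalFunctions (P K : Set ℂ) (n : ℕ) : Set C(K, ℂ) :=
  {g | ∃ p q : ℂ[X], p.natDegree ≤ n ∧ q.natDegree ≤ n ∧ q ≠ 0 ∧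
    (∀ z, q.eval z = 0 → z ∈ P \ K) ∧ ∀ z : K, g z = p.eval (z : ℂ) / q.eval (z : ℂ)}

/-- The identity map, as an element of the algebra of continuous functions on `K`. -/
abbrev coordinateFunction (K : Set ℂ) : C(K, ℂ) := (ContinuousMap.id ℂ).restrict K

variable {P K : Set ℂ} {n : ℕ} {a w : ℂ}

theorem monotone_rationalFunctions (P K : Set ℂ) : Monotone (rationalFunctions P K) := by
  rintro m n hmn g ⟨p, q, hp, hq, h⟩
  exact ⟨p, q, hp.trans hmn, hq.trans hmn, h⟩

theorem polynomialSubspace_coordinateFunction_subset (P K : Set ℂ) (n : ℕ) :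
    (polynomialSubspace ℂ (coordinateFunction K) n : Set C(K, ℂ)) ⊆ rationalFunctions P K n := by
  intro g hg
  obtain ⟨p, hp, rfl⟩ := mem_polynomialSubspace.1 hg
  exact ⟨p, 1, hp, by simp, one_ne_zero, by simp, fun z => by
    simp [aeval_continuousMap_apply]⟩

theorem add_mem_rationalFunctions {m : ℕ} {g h : C(K, ℂ)} (hg : g ∈ rationalFunctions P K m)
    (hh : h ∈ rationalFunctions P K n) : g + h ∈ rationalFunctions P K (m + n) := by
  obtain ⟨p, q, hp, hq, hq0, hqP, hgz⟩ := hg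
  obtain ⟨p', q', hp', hq', hq0', hqP', hhz⟩ := hh
  refine ⟨p * q' + q * p', q * q', natDegree_add_le_of_degree_le (natDegree_mul_le_of_le hp hq')
    (natDegree_mul_le_of_le hq hp'), natDegree_mul_le_of_le hq hq', mul_ne_zero hq0 hq0',
    fun z hz => ?_, fun z => ?_⟩
  · rw [eval_mul, mul_eq_zero] at hz
    exact hz.elim (hqP z) (hqP' z)
  · rw [ContinuousMap.add_apply, hgz, hhz, div_add_div _ _ (fun h => (hqP z h).2 z.2)
      (fun h => (hqP' z h).2 z.2), eval_add, eval_mul, eval_mul, eval_mul]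

theorem mem_resolventSet_coordinateFunction [CompactSpace K] :
    w ∈ resolventSet ℂ (coordinateFunction K) ↔ w ∉ K := by
  have h : w ∈ spectrum ℂ (coordinateFunction K) ↔ w ∈ K := by
    simp [ContinuousMap.spectrum_eq_range]
  exact (not_iff_comm.1 h).symm

theorem resolvent_coordinateFunction_apply [CompactSpace K] (hw : w ∉ K) (z : K) :
    resolvent (coordinateFunction K) w z = (w - z)⁻¹ := by
  have hinv : resolvent (coordinateFunction K) w *
      (algebraMap ℂ C(K, ℂ) w - coordinateFunction K) = 1 :=
    Ring.inverse_mul_cancel _ (mem_resolventSet_coordinateFunction.2 hw)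
  exact eq_inv_of_mul_eq_one_left (by simpa using congr($hinv z))

theorem polynomialSubspace_resolvent_coordinateFunction_subset [CompactSpace K] (ha : a ∈ P)
    (haK : a ∉ K) (n : ℕ) :
    (polynomialSubspace ℂ (resolvent (coordinateFunction K) a) n : Set C(K, ℂ)) ⊆
      rationalFunctions P K n := by
  intro g hg
  obtain ⟨p, hp, rfl⟩ := mem_polynomialSubspace.1 hg
  have hℓ : (C a - X : ℂ[X]).natDegree ≤ 1 := by compute_degree
  have hℓ0 : (C a - X : ℂ[X]) ≠ 0 := sub_ne_zero.2 (X_ne_C a).symm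
  refine ⟨(p.reflect n).comp (C a - X), (C a - X) ^ n, natDegree_reflect_comp_le hp hℓ,
    by simpa using natDegree_pow_le_of_le n hℓ, pow_ne_zero n hℓ0, fun z hz => ?_, fun z => ?_⟩
  · rw [eval_pow, eval_sub, eval_C, eval_X] at hz
    rw [← sub_eq_zero.1 (eq_zero_of_pow_eq_zero hz)]
    exact ⟨ha, haK⟩
  · have hz : (C a - X : ℂ[X]).eval (z : ℂ) ≠ 0 := by
      rw [eval_sub, eval_C, eval_X, sub_ne_zero]
      exact fun h => haK (h ▸ z.2)
    rw [eval_reflect_comp hp hz, eval_pow, mul_div_cancel_left₀ _ (pow_ne_zero n hz),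
      aeval_continuousMap_apply, resolvent_coordinateFunction_apply haK,
      eval_sub, eval_C, eval_X]

end RationalFunctions

section PlanarRunge

open MeasureTheory

variable {K U P : Set ℂ} [CompactSpace K] {f : ℂ → ℂ} {F : C(K, ℂ)}

theorem setIntegral_smul_resolvent_apply {L : Set ℂ} {φ : ℂ → ℂ} (hL : IsCompact L)
    (hLK : Disjoint L K) (hφ : IntegrableOn φ L) (z : K) :
    (∫ w in L, φ w • resolvent (coordinateFunction K) w) z = ∫ w in L, φ w * (w - z)⁻¹ := by
  have hcont : ContinuousOn (resolvent (coordinateFunction K)) L :=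
    (continuousOn_resolvent _).mono fun w hw =>
      mem_resolventSet_coordinateFunction.2 (hLK.notMem_of_mem_left hw)
  have hint := hφ.smul_continuousOn hcont hL
  refine ((ContinuousMap.evalCLM ℂ z).integral_comp_comm hint).symm.trans ?_
  refine setIntegral_congr_fun hL.measurableSet fun w hw => ?_
  simp [resolvent_coordinateFunction_apply (hLK.notMem_of_mem_left hw)]

theorem exists_eq_setIntegral_smul_resolvent (hU : IsOpen U) (hKU : K ⊆ U)
    (hf : DifferentiableOn ℂ f U) (hF : ∀ z : K, F z = f z) :
    ∃ (L : Set ℂ) (φ : ℂ → ℂ), IsCompact L ∧ Disjoint L K ∧ IntegrableOn φ L ∧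
      F = ∫ w in L, φ w • resolvent (coordinateFunction K) w := by
  obtain ⟨g, hg, hgc, hgf⟩ := exists_contDiff_hasCompactSupport_eventuallyEq (n := 1)
    (isCompact_iff_compactSpace.2 ‹_›) hU hKU ((hf.contDiffOn hU).restrict_scalars ℝ)
  have hc : HasCompactSupport (wirtingerBar g) := hgc.mono' (support_wirtingerBar_subset g)
  have hdisj : Disjoint (tsupport (wirtingerBar g)) K := by
    refine Set.disjoint_right.2 fun z hz => notMem_tsupport_wirtingerBar ?_
    filter_upwards [(hgf z hz).eventuallyEq_nhds, hU.mem_nhds (hKU hz)] with w hw hwU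
    exact (hf.differentiableAt (hU.mem_nhds hwU)).congr_of_eventuallyEq hw
  have hφ : IntegrableOn (fun w => -(Real.pi : ℂ)⁻¹ * wirtingerBar g w)
      (tsupport (wirtingerBar g)) :=
    (((continuous_wirtingerBar hg).integrable_of_hasCompactSupport hc).const_mul _).integrableOn
  refine ⟨_, _, hc.isCompact, hdisj, hφ, ContinuousMap.ext fun z => ?_⟩
  have hzero (w : ℂ) (hw : w ∉ tsupport (wirtingerBar g)) :
      -(Real.pi : ℂ)⁻¹ * wirtingerBar g w * (w - z)⁻¹ = 0 := by
    rw [image_eq_zero_of_notMem_tsupport hw, mul_zero, zero_mul]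
  have hpi : (Real.pi : ℂ) ≠ 0 := by exact_mod_cast Real.pi_ne_zero
  have hCP := integral_inv_sub_smul_wirtingerBar hg hgc z
  symm
  calc _ = ∫ w, -(Real.pi : ℂ)⁻¹ * ((w - (z : ℂ))⁻¹ • wirtingerBar g w) := by
        rw [setIntegral_smul_resolvent_apply hc.isCompact hdisj hφ,
          setIntegral_eq_integral_of_forall_compl_eq_zero hzero]
        simp only [mul_assoc, smul_eq_mul, mul_comm (wirtingerBar g _)]
    _ = -(Real.pi : ℂ)⁻¹ * (-Real.pi • g z) := by rw [integral_const_mul, hCP]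
    _ = F z := by
        rw [(hgf z z.2).eq_of_nhds, hF, Complex.real_smul]
        push_cast
        field_simp

theorem exists_mem_polynomialResolventSet_coordinateFunction
    (hP : ∀ C ∈ graphFaces (toSphere K), OnePoint.infty ∉ C → ∃ a ∈ P, (a : OnePoint ℂ) ∈ C)
    {w : ℂ} (hw : w ∉ K) :
    ∃ u, (∀ n, (polynomialSubspace ℂ u n : Set C(K, ℂ)) ⊆ rationalFunctions P K n) ∧
      w ∈ polynomialResolventSet ℂ u (coordinateFunction K) := by
  have hmem (z : ℂ) : (z : OnePoint ℂ) ∈ (toSphere K)ᶜ ↔ z ∉ K :=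
    OnePoint.coe_injective.mem_set_image.not
  set C := connectedComponentIn (toSphere K)ᶜ (w : OnePoint ℂ)
  have hC : IsPreconnected C := isPreconnected_connectedComponentIn
  have hwC : (w : OnePoint ℂ) ∈ C := mem_connectedComponentIn ((hmem w).2 hw)
  have hCK (z : ℂ) (hz : (z : OnePoint ℂ) ∈ C) : z ∉ K :=
    (hmem z).1 (connectedComponentIn_subset _ _ hz)
  have hCx (z : ℂ) (hz : (z : OnePoint ℂ) ∈ C) : z ∈ resolventSet ℂ (coordinateFunction K) :=
    mem_resolventSet_coordinateFunction.2 (hCK z hz)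
  by_cases hinf : OnePoint.infty ∈ C
  · exact ⟨_, polynomialSubspace_coordinateFunction_subset P K,
      mem_polynomialResolventSet_self_of_isPreconnected hC hCx hinf hwC⟩
  · obtain ⟨a, haP, haC⟩ := hP C ⟨w, (hmem w).2 hw, rfl⟩ hinf
    exact ⟨_, polynomialSubspace_resolvent_coordinateFunction_subset haP (hCK a haC),
      mem_polynomialResolventSet_resolvent_of_isPreconnected hC hCx hinf haC hwC⟩

theorem hasGeometricApprox_rationalFunctions
    (hP : ∀ C ∈ graphFaces (toSphere K), OnePoint.infty ∉ C → ∃ a ∈ P, (a : OnePoint ℂ) ∈ C)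
    (hU : IsOpen U) (hKU : K ⊆ U) (hf : DifferentiableOn ℂ f U) (hF : ∀ z : K, F z = f z) :
    HasGeometricApprox (rationalFunctions P K) F := by
  obtain ⟨L, φ, hL, hLK, hφ, rfl⟩ := exists_eq_setIntegral_smul_resolvent hU hKU hf hF
  exact hasGeometricApprox_setIntegral_resolvent
    (polynomialSubspace_coordinateFunction_subset P K 0 (zero_mem _))
    (fun _ _ _ _ => add_mem_rationalFunctions) hL hφ fun w hw =>
    exists_mem_polynomialResolventSet_coordinateFunction hP (hLK.notMem_of_mem_left hw)

end PlanarRunge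

section HomogeneousCoordinates

/-- The point of the Riemann sphere with homogeneous coordinates `(a, b)`; the pair `(0, 0)` gets
the junk value `∞`. -/
def homogeneousPoint (x : ℂ × ℂ) : OnePoint ℂ :=
  if x.2 = 0 then OnePoint.infty else ((x.1 / x.2 : ℂ) : OnePoint ℂ)

theorem homogeneousPoint_of_snd_eq_zero {x : ℂ × ℂ} (hx : x.2 = 0) :
    homogeneousPoint x = OnePoint.infty :=
  if_pos hx

theorem homogeneousPoint_of_snd_ne_zero {x : ℂ × ℂ} (hx : x.2 ≠ 0) :
    homogeneousPoint x = ((x.1 / x.2 : ℂ) : OnePoint ℂ) :=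
  if_neg hx

theorem homogeneousPoint_mul {c : ℂ} (hc : c ≠ 0) (a b : ℂ) :
    homogeneousPoint (c * a, c * b) = homogeneousPoint (a, b) := by
  simp [homogeneousPoint, hc, mul_div_mul_left]

theorem continuousAt_homogeneousPoint_of_snd_eq_zero {x : ℂ × ℂ} (h₁ : x.1 ≠ 0) (h₂ : x.2 = 0) :
    ContinuousAt homogeneousPoint x := by
  rw [ContinuousAt, homogeneousPoint_of_snd_eq_zero h₂,
    (OnePoint.hasBasis_nhds_infty (X := ℂ)).tendsto_right_iff]
  rintro s ⟨-, hs⟩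
  obtain ⟨M, hM⟩ := hs.isBounded.subset_closedBall 0
  have hlt : ∀ᶠ y : ℂ × ℂ in 𝓝 x, M * ‖y.2‖ < ‖y.1‖ :=
    ContinuousAt.eventually_lt (by fun_prop) (by fun_prop) (by simpa [h₂] using h₁)
  filter_upwards [hlt] with y hy
  rcases eq_or_ne y.2 0 with hy₂ | hy₂
  · exact Or.inr (homogeneousPoint_of_snd_eq_zero hy₂)
  · refine Or.inl ⟨y.1 / y.2, fun hys => ?_, (homogeneousPoint_of_snd_ne_zero hy₂).symm⟩
    have hle := mem_closedBall_zero_iff.1 (hM hys)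
    rw [norm_div, div_le_iff₀ (norm_pos_iff.2 hy₂)] at hle
    exact hy.not_ge hle

theorem continuousAt_homogeneousPoint_of_snd_ne_zero {x : ℂ × ℂ} (hx : x.2 ≠ 0) :
    ContinuousAt homogeneousPoint x := by
  have hdiv : ContinuousAt (fun y : ℂ × ℂ => ((y.1 / y.2 : ℂ) : OnePoint ℂ)) x :=
    OnePoint.continuous_coe.continuousAt.comp (continuousAt_fst.div continuousAt_snd hx)
  refine hdiv.congr ?_
  filter_upwards [continuousAt_snd.eventually_ne hx] with y hy
  exact (homogeneousPoint_of_snd_ne_zero hy).symm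

theorem continuousAt_homogeneousPoint {x : ℂ × ℂ} (hx : x ≠ 0) :
    ContinuousAt homogeneousPoint x := by
  by_cases h : x.2 = 0
  · exact continuousAt_homogeneousPoint_of_snd_eq_zero (fun h' => hx (Prod.ext h' h)) h
  · exact continuousAt_homogeneousPoint_of_snd_ne_zero h

end HomogeneousCoordinates

section SphereQuotient

/-- The map of the Riemann sphere given by the quotient `p / q` of two polynomials of degree at
most `n`, via the homogeneous forms of degree `n` attached to `p` and `q`. -/
def sphereQuotient (n : ℕ) (p q : ℂ[X]) (x : OnePoint ℂ) : OnePoint ℂ :=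
  x.elim (homogeneousPoint (p.coeff n, q.coeff n)) fun z => homogeneousPoint (p.eval z, q.eval z)

variable {n : ℕ} {p q : ℂ[X]}

theorem sphereQuotient_coe (n : ℕ) (p q : ℂ[X]) (z : ℂ) :
    sphereQuotient n p q z = homogeneousPoint (p.eval z, q.eval z) := rfl

theorem sphereQuotient_infty (n : ℕ) (p q : ℂ[X]) :
    sphereQuotient n p q OnePoint.infty = homogeneousPoint (p.coeff n, q.coeff n) := rfl

theorem sphereQuotient_coe_of_ne {z : ℂ} (h : q.eval z ≠ 0) :
    sphereQuotient n p q z = ((p.eval z / q.eval z : ℂ) : OnePoint ℂ) :=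
  homogeneousPoint_of_snd_ne_zero h

theorem sphereQuotient_coe_inv (hp : p.natDegree ≤ n) (hq : q.natDegree ≤ n) {z : ℂ}
    (hz : z ≠ 0) :
    sphereQuotient n p q (z⁻¹ : ℂ) =
      homogeneousPoint ((p.reflect n).eval z, (q.reflect n).eval z) := by
  have hX : (X : ℂ[X]).eval z ≠ 0 := by rwa [eval_X]
  have hp' := eval_reflect_comp hp hX
  have hq' := eval_reflect_comp hq hX
  rw [comp_X, eval_X] at hp' hq'
  rw [hp', hq', homogeneousPoint_mul (pow_ne_zero n hz), sphereQuotient_coe]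

theorem continuousAt_sphereQuotient_coe {z : ℂ} (hz : p.eval z = 0 → q.eval z ≠ 0) :
    ContinuousAt (sphereQuotient n p q) z := by
  rw [OnePoint.continuousAt_coe]
  refine ContinuousAt.comp (g := homogeneousPoint) (f := fun z => (p.eval z, q.eval z))
    (continuousAt_homogeneousPoint fun h => ?_) (by fun_prop)
  exact hz congr($h.1) congr($h.2)

theorem continuousAt_sphereQuotient_infty (hp : p.natDegree ≤ n) (hq : q.natDegree ≤ n)
    (hn : p.coeff n = 0 → q.coeff n ≠ 0) :
    ContinuousAt (sphereQuotient n p q) OnePoint.infty := by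
  have heval (r : ℂ[X]) : (r.reflect n).eval 0 = r.coeff n := by
    rw [← coeff_zero_eq_eval_zero, coeff_reflect, revAt_zero]
  have hcont : ContinuousAt
      (fun w : ℂ => homogeneousPoint ((p.reflect n).eval w, (q.reflect n).eval w)) 0 := by
    refine ContinuousAt.comp (g := homogeneousPoint) (continuousAt_homogeneousPoint fun h => ?_)
      (by fun_prop)
    simp only [heval, Prod.mk_eq_zero] at h
    exact hn h.1 h.2
  have hlim := hcont.tendsto.comp (tendsto_inv₀_cobounded (α := ℂ))
  simp only [heval] at hlim
  rw [OnePoint.continuousAt_infty', Filter.coclosedCompact_eq_cocompact,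
    ← Metric.cobounded_eq_cocompact, sphereQuotient_infty]
  refine hlim.congr' ?_
  filter_upwards [Bornology.eventually_ne_cobounded (0 : ℂ)] with z hz
  exact (sphereQuotient_coe_inv hp hq (inv_ne_zero hz)).symm.trans (by
    simp only [inv_inv, Function.comp_apply])

theorem continuous_sphereQuotient (hp : p.natDegree ≤ n) (hq : q.natDegree ≤ n)
    (hpq : ∀ z, p.eval z = 0 → q.eval z ≠ 0) (hn : p.coeff n = 0 → q.coeff n ≠ 0) :
    Continuous (sphereQuotient n p q) :=
  continuous_iff_continuousAt.2 <| OnePoint.forall.2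
    ⟨continuousAt_sphereQuotient_infty hp hq hn, fun z => continuousAt_sphereQuotient_coe (hpq z)⟩

theorem continuous_sphereQuotient_of_isCoprime (hpq : IsCoprime p q) :
    Continuous (sphereQuotient (max p.natDegree q.natDegree) p q) := by
  refine continuous_sphereQuotient (le_max_left _ _) (le_max_right _ _)
    (fun z hp hq => ?_) fun hp hq => ?_
  · obtain ⟨a, b, hab⟩ := hpq
    simpa [hp, hq] using congr(eval z $hab)
  · have hzero : p = 0 ∧ q = 0 := by
      rcases le_total p.natDegree q.natDegree with h | h
      · rw [max_eq_right h, coeff_natDegree, leadingCoeff_eq_zero] at hq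
        rw [hq, natDegree_zero, Nat.le_zero] at h
        rw [hq, h, natDegree_zero, max_self, ← h, coeff_natDegree, leadingCoeff_eq_zero] at hp
        exact ⟨hp, hq⟩
      · rw [max_eq_left h, coeff_natDegree, leadingCoeff_eq_zero] at hp
        rw [hp, natDegree_zero, Nat.le_zero] at h
        rw [hp, h, natDegree_zero, max_self, ← h, coeff_natDegree, leadingCoeff_eq_zero] at hq
        exact ⟨hp, hq⟩
    exact not_isCoprime_zero_zero (hzero.1 ▸ hzero.2 ▸ hpq)

end SphereQuotient

section RationalMaps

variable {n : ℕ} {p q : ℂ[X]} {r : OnePoint ℂ → OnePoint ℂ}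

theorem exists_isCoprime_mul_eq {k : Type*} [Field k] (p : k[X]) {q : k[X]} (hq : q ≠ 0) :
    ∃ g p' q' : k[X], IsCoprime p' q' ∧ g * p' = p ∧ g * q' = q ∧
      p'.natDegree ≤ p.natDegree ∧ q'.natDegree ≤ q.natDegree := by
  obtain ⟨p', q', g, hco, rfl, rfl⟩ := UniqueFactorizationMonoid.exists_reduced_factors' p q hq
  have hdeg (r : k[X]) : r.natDegree ≤ (g * r).natDegree := by
    rcases eq_or_ne r 0 with rfl | hr
    · rw [mul_zero]
    · exact natDegree_le_of_dvd (dvd_mul_left r g) (mul_ne_zero (left_ne_zero_of_mul hq) hr)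
  exact ⟨g, p', q', isRelPrime_iff_isCoprime.1 hco, rfl, rfl, hdeg p', hdeg q'⟩

theorem exists_isRationalMapDegLE (hp : p.natDegree ≤ n) (hq : q.natDegree ≤ n) (hq₀ : q ≠ 0) :
    ∃ r : OnePoint ℂ → OnePoint ℂ, IsRationalMapDegLE r n ∧
      ∀ z : ℂ, q.eval z ≠ 0 → r z = ((p.eval z / q.eval z : ℂ) : OnePoint ℂ) := by
  obtain ⟨g, p', q', hco, rfl, rfl, hp', hq'⟩ := exists_isCoprime_mul_eq p hq₀
  refine ⟨_, ⟨continuous_sphereQuotient_of_isCoprime hco, p', q', hco, right_ne_zero_of_mul hq₀,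
    hp'.trans hp, hq'.trans hq, fun z => sphereQuotient_coe_of_ne⟩, fun z hz => ?_⟩
  rw [eval_mul] at hz
  rw [sphereQuotient_coe_of_ne (right_ne_zero_of_mul hz), eval_mul, eval_mul,
    mul_div_mul_left _ _ (left_ne_zero_of_mul hz)]

theorem eventually_cofinite_eval_ne_zero {k : Type*} [Field k] {p : k[X]} (hp : p ≠ 0) :
    ∀ᶠ z in cofinite, p.eval z ≠ 0 := by
  simpa using! finite_setOfPred_isRoot hp

theorem isRationalMapDegLE_of_eventually_cofinite (hr : Continuous r) (hp : p.natDegree ≤ n)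
    (hq : q.natDegree ≤ n) (hq₀ : q ≠ 0)
    (h : ∀ᶠ z : ℂ in cofinite, r z = ((p.eval z / q.eval z : ℂ) : OnePoint ℂ)) :
    IsRationalMapDegLE r n := by
  obtain ⟨g, p', q', hco, rfl, rfl, hp', hq'⟩ := exists_isCoprime_mul_eq p hq₀
  refine ⟨hr, p', q', hco, right_ne_zero_of_mul hq₀, hp'.trans hp, hq'.trans hq, fun z hz => ?_⟩
  have hquot : ContinuousAt (fun w : ℂ => ((p'.eval w / q'.eval w : ℂ) : OnePoint ℂ)) z :=
    OnePoint.continuous_coe.continuousAt.comp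
      (p'.continuous.continuousAt.div q'.continuous.continuousAt hz)
  have hrz : ContinuousAt (fun w : ℂ => r w) z := (hr.comp OnePoint.continuous_coe).continuousAt
  refine tendsto_nhds_unique_of_eventuallyEq (hrz.tendsto.mono_left nhdsWithin_le_nhds)
    (hquot.tendsto.mono_left (nhdsWithin_le_nhds (s := {z}ᶜ))) ?_
  filter_upwards [nhdsNE_le_cofinite z h,
    nhdsNE_le_cofinite z (eventually_cofinite_eval_ne_zero (left_ne_zero_of_mul hq₀))] with w hw hg
  rw [hw, eval_mul, eval_mul, mul_div_mul_left _ _ hg]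

theorem isRationalMapDegLE_const (c : ℂ) (n : ℕ) :
    IsRationalMapDegLE (fun _ => (c : OnePoint ℂ)) n :=
  ⟨continuous_const, C c, 1, isCoprime_one_right, one_ne_zero, by simp, by simp, by simp⟩

end RationalMaps

section Moebius

/-- The Möbius transformation `z ↦ (z - a)⁻¹` of the Riemann sphere, which moves `a` to `∞`. -/
def invSubHomeomorph (a : ℂ) : OnePoint ℂ ≃ₜ OnePoint ℂ where
  toFun := sphereQuotient 1 1 (X - C a)
  invFun := sphereQuotient 1 (C a * X + 1) X
  left_inv x := by
    induction x using OnePoint.rec with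
    | infty => simp [sphereQuotient_infty, sphereQuotient_coe, homogeneousPoint, coeff_one]
    | coe z =>
      by_cases hz : z - a = 0
      · simp [sphereQuotient_coe, homogeneousPoint, sphereQuotient_infty, coeff_one,
          sub_eq_zero.1 hz]
      · have h : (a * (z - a)⁻¹ + 1) / (z - a)⁻¹ = z := by field_simp; ring
        simp [sphereQuotient_coe, homogeneousPoint, hz, h, -div_inv_eq_mul]
  right_inv x := by
    induction x using OnePoint.rec with
    | infty => simp [sphereQuotient_infty, sphereQuotient_coe, homogeneousPoint, coeff_one]
    | coe z =>
      by_cases hz : z = 0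
      · simp [sphereQuotient_coe, homogeneousPoint, hz, sphereQuotient_infty, coeff_one]
      · have h : (a * z + 1) / z - a = z⁻¹ := by field_simp; ring
        simp [sphereQuotient_coe, homogeneousPoint, hz, h]
  continuous_toFun := continuous_sphereQuotient (by simp) (natDegree_X_sub_C_le a) (by simp)
    (by simp)
  continuous_invFun := continuous_sphereQuotient (by compute_degree) natDegree_X_le
    (fun z h h' => by
      rw [eval_X] at h'
      simp [h'] at h)
    (by simp)

variable {a : ℂ}

theorem invSubHomeomorph_coe_of_ne {z : ℂ} (hz : z ≠ a) :
    invSubHomeomorph a z = (((z - a)⁻¹ : ℂ) : OnePoint ℂ) := by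
  have hz' : (X - C a).eval z ≠ 0 := by simpa [sub_eq_zero] using hz
  exact (sphereQuotient_coe_of_ne (n := 1) (p := 1) hz').trans (by simp)

theorem invSubHomeomorph_coe_self (a : ℂ) : invSubHomeomorph a a = OnePoint.infty :=
  homogeneousPoint_of_snd_eq_zero (by simp)

theorem invSubHomeomorph_symm_infty (a : ℂ) : (invSubHomeomorph a).symm OnePoint.infty = a :=
  (Equiv.symm_apply_eq _).2 (invSubHomeomorph_coe_self a).symm

theorem invSubHomeomorph_symm_zero (a : ℂ) :
    (invSubHomeomorph a).symm (0 : ℂ) = OnePoint.infty :=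
  homogeneousPoint_of_snd_eq_zero (by simp)

theorem invSubHomeomorph_symm_coe_of_ne (a : ℂ) {w : ℂ} (hw : w ≠ 0) :
    (invSubHomeomorph a).symm w = ((a + w⁻¹ : ℂ) : OnePoint ℂ) := by
  have hne : a + w⁻¹ ≠ a := by simpa using hw
  rw [Homeomorph.symm_apply_eq, invSubHomeomorph_coe_of_ne hne, add_sub_cancel_left, inv_inv]

theorem IsRationalMapDegLE.comp_invSubHomeomorph {r : OnePoint ℂ → OnePoint ℂ} {n : ℕ}
    (hr : IsRationalMapDegLE r n) (a : ℂ) : IsRationalMapDegLE (r ∘ invSubHomeomorph a) n := by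
  obtain ⟨hrc, p, q, -, hq₀, hp, hq, hpq⟩ := hr
  have hℓ : (X - C a).natDegree ≤ 1 := natDegree_X_sub_C_le a
  have hQ : (q.reflect n).comp (X - C a) ≠ 0 := by
    rw [Ne, comp_eq_zero_iff, reflect_eq_zero_iff]
    rintro (h | ⟨-, h⟩)
    · exact hq₀ h
    · simpa using congr(natDegree $h)
  refine isRationalMapDegLE_of_eventually_cofinite (hrc.comp (invSubHomeomorph a).continuous)
    (natDegree_reflect_comp_le hp hℓ) (natDegree_reflect_comp_le hq hℓ) hQ ?_
  filter_upwards [eventually_cofinite_eval_ne_zero hQ, eventually_cofinite_ne a] with z hqz hz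
  have hℓz : (X - C a).eval z ≠ 0 := by simpa [sub_eq_zero] using hz
  rw [eval_reflect_comp hq hℓz] at hqz ⊢
  rw [eval_reflect_comp hp hℓz, mul_div_mul_left _ _ (left_ne_zero_of_mul hqz),
    Function.comp_apply, invSubHomeomorph_coe_of_ne hz]
  simpa using hpq _ (right_ne_zero_of_mul hqz)

end Moebius

section SphereHolomorphic

variable {f : OnePoint ℂ → ℂ} {U : Set (OnePoint ℂ)}

theorem SphereHolomorphicOn.differentiableAt_comp_invSubHomeomorph_symm_zero
    (hf : SphereHolomorphicOn f U) (hU : OnePoint.infty ∈ U) (a : ℂ) :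
    DifferentiableAt ℂ (fun v : ℂ => f ((invSubHomeomorph a).symm v)) 0 := by
  obtain ⟨s, hs, hd⟩ := hf.2 hU
  have hne : ∀ᶠ v : ℂ in 𝓝 0, 1 + a * v ≠ 0 :=
    ContinuousAt.eventually_ne (by fun_prop) (by simp)
  have hg : DifferentiableAt ℂ (fun v : ℂ => v / (1 + a * v)) 0 :=
    differentiableAt_id.div (by fun_prop) (by simp)
  have hd₀ := hd.differentiableAt hs
  refine (DifferentiableAt.comp (0 : ℂ) (by rwa [zero_div]) hg).congr_of_eventuallyEq ?_
  filter_upwards [hne] with v hv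
  rcases eq_or_ne v 0 with rfl | hv₀
  · simp [invSubHomeomorph_symm_zero]
  · have hsymm : a + v⁻¹ = (v / (1 + a * v))⁻¹ := by field_simp; ring
    rw [invSubHomeomorph_symm_coe_of_ne a hv₀, Function.comp_apply,
      if_neg (div_ne_zero hv₀ hv), hsymm]

theorem SphereHolomorphicOn.differentiableAt_comp_invSubHomeomorph_symm
    (hf : SphereHolomorphicOn f U) {a w : ℂ} (hw : (invSubHomeomorph a).symm w ∈ U) :
    DifferentiableAt ℂ (fun v : ℂ => f ((invSubHomeomorph a).symm v)) w := by
  rcases eq_or_ne w 0 with rfl | hw₀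
  · rw [invSubHomeomorph_symm_zero] at hw
    exact hf.differentiableAt_comp_invSubHomeomorph_symm_zero hw a
  · rw [invSubHomeomorph_symm_coe_of_ne a hw₀] at hw
    have hg : DifferentiableAt ℂ (fun v : ℂ => a + v⁻¹) w := (differentiableAt_inv hw₀).const_add a
    refine ((hf.1 _ hw).comp w hg).congr_of_eventuallyEq ?_
    filter_upwards [eventually_ne_nhds hw₀] with v hv
    rw [invSubHomeomorph_symm_coe_of_ne a hv, Function.comp_apply]

theorem SphereHolomorphicOn.eq_apply_infty (hf : SphereHolomorphicOn f univ) (x : OnePoint ℂ) :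
    f x = f OnePoint.infty := by
  induction x using OnePoint.rec with
  | infty => rfl
  | coe z =>
    have hd : Differentiable ℂ fun w : ℂ => f w := fun w => hf.1 w (mem_univ _)
    refine hd.apply_eq_of_tendsto_cocompact z ?_
    obtain ⟨s, hs, hs'⟩ := hf.2 (mem_univ _)
    have hlim :=
      (hs'.differentiableAt hs).continuousAt.tendsto.comp (tendsto_inv₀_cobounded (α := ℂ))
    rw [if_pos rfl] at hlim
    rw [← Metric.cobounded_eq_cocompact]
    refine hlim.congr' ?_
    filter_upwards [Bornology.eventually_ne_cobounded (0 : ℂ)] with w hw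
    rw [Function.comp_apply, if_neg (inv_ne_zero hw), inv_inv]

end SphereHolomorphic

section SphereRunge

/-- `f` can be approximated on `K`, at a geometric rate, by rational maps with poles in `P`. -/
def HasGeometricRationalApprox (P K : Set (OnePoint ℂ)) (f : OnePoint ℂ → ℂ) : Prop :=
  ∃ A B : ℝ, 1 < A ∧ 1 < B ∧
    ∃ R : ℕ → (OnePoint ℂ → OnePoint ℂ), ∀ n : ℕ,
      IsRationalMapDegLE (R n) n ∧ (R n) ⁻¹' {OnePoint.infty} ⊆ P ∧
      ∀ z ∈ K, ∃ w : ℂ, R n z = (w : OnePoint ℂ) ∧ ‖f z - w‖ ≤ A / B ^ n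

variable {K P U : Set (OnePoint ℂ)} {f : OnePoint ℂ → ℂ}

theorem image_mem_graphFaces {X Y : Type*} [TopologicalSpace X] [TopologicalSpace Y] (T : X ≃ₜ Y)
    {G F : Set X} (hF : F ∈ graphFaces G) : T '' F ∈ graphFaces (T '' G) := by
  obtain ⟨x, hx, rfl⟩ := hF
  rw [graphFaces, ← T.image_compl]
  exact ⟨T x, mem_image_of_mem T hx, T.image_connectedComponentIn hx⟩

theorem exists_rationalMap_of_mem_rationalFunctions {P : Set (OnePoint ℂ)} {K : Set ℂ} {n : ℕ}
    {g : C(K, ℂ)} (hg : g ∈ rationalFunctions ((↑) ⁻¹' P) K n) (hP : OnePoint.infty ∈ P) :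
    ∃ r : OnePoint ℂ → OnePoint ℂ, IsRationalMapDegLE r n ∧ r ⁻¹' {OnePoint.infty} ⊆ P ∧
      ∀ z : K, r (z : ℂ) = (g z : OnePoint ℂ) := by
  obtain ⟨p, q, hp, hq, hq₀, hqP, hgz⟩ := hg
  obtain ⟨r, hr, hrz⟩ := exists_isRationalMapDegLE hp hq hq₀
  refine ⟨r, hr, fun x hx => ?_, fun z => ?_⟩
  · induction x using OnePoint.rec with
    | infty => exact hP
    | coe z =>
      refine (hqP z ?_).1
      by_contra hz
      exact OnePoint.coe_ne_infty _ ((hrz z hz).symm.trans hx)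
  · rw [hrz z fun h => (hqP z h).2 z.2, hgz]

theorem hasGeometricRationalApprox_of_infty_mem (hK : IsCompact K)
    (hP : ∀ F ∈ graphFaces K, (P ∩ F).Nonempty) (hPinf : OnePoint.infty ∈ P)
    (hKinf : OnePoint.infty ∉ K) (hU : IsOpen U) (hKU : K ⊆ U)
    (hf : ∀ z : ℂ, (z : OnePoint ℂ) ∈ U → DifferentiableAt ℂ (fun w : ℂ => f w) z) :
    HasGeometricRationalApprox P K f := by
  obtain ⟨K, rfl⟩ : ∃ K' : Set ℂ, toSphere K' = K :=
    subset_range_iff_exists_image_eq.1 fun x hx =>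
      OnePoint.ne_infty_iff_exists.1 (ne_of_mem_of_not_mem hx hKinf)
  have : CompactSpace K :=
    isCompact_iff_compactSpace.1 (OnePoint.isClosed_image_coe.1 hK.isClosed).2
  have hKU' : K ⊆ (↑) ⁻¹' U := image_subset_iff.1 hKU
  have hd : DifferentiableOn ℂ (fun z : ℂ => f z) ((↑) ⁻¹' U) :=
    fun z hz => (hf z hz).differentiableWithinAt
  let F : C(K, ℂ) := ⟨fun z => f (z : ℂ), (hd.continuousOn.mono hKU').domRestrict⟩
  have hP' (C : Set (OnePoint ℂ)) (hC : C ∈ graphFaces (toSphere K)) (hinf : OnePoint.infty ∉ C) :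
      ∃ a ∈ ((↑) ⁻¹' P : Set ℂ), (a : OnePoint ℂ) ∈ C := by
    obtain ⟨x, hxP, hxC⟩ := hP C hC
    obtain ⟨a, rfl⟩ := OnePoint.ne_infty_iff_exists.1 (ne_of_mem_of_not_mem hxC hinf)
    exact ⟨a, hxP, hxC⟩
  obtain ⟨A, B, hA, hB, hAB⟩ := (hasGeometricApprox_rationalFunctions (F := F) hP'
    (hU.preimage OnePoint.continuous_coe) hKU' hd fun _ => rfl).exists_norm_sub_le
    (monotone_rationalFunctions _ _)
  choose g hg hFg using hAB
  choose R hR hRP hRg using fun n => exists_rationalMap_of_mem_rationalFunctions (hg n) hPinf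
  refine ⟨A, B, hA, hB, R, fun n => ⟨hR n, hRP n, forall_mem_image.2 fun z hz => ?_⟩⟩
  exact ⟨g n ⟨z, hz⟩, hRg n ⟨z, hz⟩,
    ((F - g n).norm_coe_le_norm ⟨z, hz⟩).trans (hFg n)⟩

theorem HasGeometricRationalApprox.of_image_invSubHomeomorph {a : ℂ}
    (h : HasGeometricRationalApprox (invSubHomeomorph a '' P) (invSubHomeomorph a '' K)
      (f ∘ (invSubHomeomorph a).symm)) :
    HasGeometricRationalApprox P K f := by
  obtain ⟨A, B, hA, hB, R, hR⟩ := h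
  refine ⟨A, B, hA, hB, fun n => R n ∘ invSubHomeomorph a, fun n =>
    ⟨(hR n).1.comp_invSubHomeomorph a, fun x hx => ?_, fun z hz => ?_⟩⟩
  · exact (invSubHomeomorph a).injective.mem_set_image.1 ((hR n).2.1 hx)
  · simpa using (hR n).2.2 _ (mem_image_of_mem (invSubHomeomorph a) hz)

theorem hasGeometricRationalApprox_of_coe_mem (hK : IsCompact K)
    (hP : ∀ F ∈ graphFaces K, (P ∩ F).Nonempty) {a : ℂ} (haP : (a : OnePoint ℂ) ∈ P)
    (haK : (a : OnePoint ℂ) ∉ K) (hU : IsOpen U) (hKU : K ⊆ U) (hf : SphereHolomorphicOn f U) :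
    HasGeometricRationalApprox P K f := by
  set T := invSubHomeomorph a
  have hTP : ∀ F ∈ graphFaces (T '' K), (T '' P ∩ F).Nonempty := fun F hF => by
    have hF' := image_mem_graphFaces T.symm hF
    rw [Function.LeftInverse.image_image T.symm_apply_apply] at hF'
    obtain ⟨-, hyP, y, hyF, rfl⟩ := hP _ hF'
    exact ⟨y, ⟨T.symm y, hyP, T.apply_symm_apply y⟩, hyF⟩
  refine .of_image_invSubHomeomorph (hasGeometricRationalApprox_of_infty_mem (U := T '' U)
    (hK.image T.continuous) hTP ⟨a, haP, invSubHomeomorph_coe_self a⟩ ?_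
    (T.isOpenMap U hU) (image_mono hKU) fun z hz => ?_)
  · rwa [T.image_eq_preimage_symm, mem_preimage, invSubHomeomorph_symm_infty]
  · rw [T.image_eq_preimage_symm] at hz
    exact hf.differentiableAt_comp_invSubHomeomorph_symm hz

theorem SphereHolomorphicOn.hasGeometricRationalApprox_univ (hf : SphereHolomorphicOn f univ)
    (P : Set (OnePoint ℂ)) : HasGeometricRationalApprox P univ f := by
  refine ⟨2, 2, one_lt_two, one_lt_two, fun _ _ => (f OnePoint.infty : OnePoint ℂ), fun n =>
    ⟨isRationalMapDegLE_const _ n, fun x hx => absurd hx (OnePoint.coe_ne_infty _), fun z _ =>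
      ⟨_, rfl, ?_⟩⟩⟩
  rw [hf.eq_apply_infty z, sub_self, norm_zero]
  positivity

theorem quantitative_runge_general (hK : IsCompact K)
    (hP : ∀ F ∈ graphFaces K, (P ∩ F).Nonempty) (hU : IsOpen U) (hKU : K ⊆ U)
    (hf : SphereHolomorphicOn f U) :
    HasGeometricRationalApprox P K f := by
  rcases eq_or_ne K univ with rfl | hne
  · rw [univ_subset_iff.1 hKU] at hf
    exact hf.hasGeometricRationalApprox_univ P
  · obtain ⟨x, hx⟩ := (ne_univ_iff_exists_notMem K).1 hne
    obtain ⟨y, hyP, hy⟩ := hP _ ⟨x, hx, rfl⟩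
    have hyK : y ∉ K := connectedComponentIn_subset _ _ hy
    induction y using OnePoint.rec with
    | infty => exact hasGeometricRationalApprox_of_infty_mem hK hP hyP hyK hU hKU hf.1
    | coe a => exact hasGeometricRationalApprox_of_coe_mem hK hP hyP hyK hU hKU hf

end SphereRunge

/-- **Theorem B** (quantitative Runge theorem): a function holomorphic in a
neighborhood of a compact set `K ⊆ Ĉ` can be approximated at a geometric rate by
rational maps of degree `≤ n` whose poles lie in a set `P` having exactly one point
in each complementary component of `K`. -/
theorem quantitative_runge
    (K : Set (OnePoint ℂ)) (hK : IsCompact K)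
    (P : Set (OnePoint ℂ))
    (hP₁ : ∀ F ∈ graphFaces K, ∃! z, z ∈ P ∩ F)
    (hP₂ : P ⊆ Kᶜ)
    (f : OnePoint ℂ → ℂ) (U : Set (OnePoint ℂ)) (hUopen : IsOpen U) (hKU : K ⊆ U)
    (hf : SphereHolomorphicOn f U) :
    ∃ A B : ℝ, 1 < A ∧ 1 < B ∧
      ∃ R : ℕ → (OnePoint ℂ → OnePoint ℂ), ∀ n : ℕ,
        IsRationalMapDegLE (R n) n ∧ (R n) ⁻¹' {OnePoint.infty} ⊆ P ∧
        ∀ z ∈ K, ∃ w : ℂ, R n z = (w : OnePoint ℂ) ∧ ‖f z - w‖ ≤ A / B ^ n :=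
  quantitative_runge_general hK (fun F hF => (hP₁ F hF).exists) hUopen hKU hf

end
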